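/- Let I ⊆ (-1,1) be an open interval, α ∈ ℝ, λ ∈ ℝ, and let τ, π : ℝ → ℝ be polynomials that do not vanish on I. Define, for smooth y : I → ℝ, the operators T^{(α)}_τ y = (1-z²)·(y'' - 2(τ'/τ)·y' + (τ''/τ)·y) - (2α+1)·z·y' + (2α-1)·z·(τ'/τ)·y, A y = τ⁻¹·(π·y' - π'·y), and B y = (1-z²)·π⁻¹·(τ·y' - τ'·y) - (2α+1)·z·(τ/π)·y. If T^{(α)}_τ π = λ·π on I, then for every smooth y : I → ℝ one has B(A y) = T^{(α)}_τ y - λ·y and A(B y) = T^{(α+1)}_π y - (λ + 2α + 1)·y on I. -/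

import Mathlib

open Set Polynomial

/-- The exceptional Gegenbauer operator `T^{(α)}_τ` (with `τ` a polynomial),
acting on smooth functions. -/
noncomputable def xGegenOp (α : ℝ) (τ : Polynomial ℝ) (y : ℝ → ℝ) (z : ℝ) : ℝ :=
  (1 - z ^ 2) * (deriv (deriv y) z
      - 2 * ((derivative τ).eval z / τ.eval z) * deriv y z
      + ((derivative (derivative τ)).eval z / τ.eval z) * y z)
    - (2 * α + 1) * z * deriv y z
    + (2 * α - 1) * z * ((derivative τ).eval z / τ.eval z) * y z

/-- The first-order operator `A_{τπ} y = τ⁻¹(π y' - π' y)`. -/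
noncomputable def aOp (τ π : Polynomial ℝ) (y : ℝ → ℝ) (z : ℝ) : ℝ :=
  (π.eval z * deriv y z - (derivative π).eval z * y z) / τ.eval z

/-- The first-order operator `B^{(α)}_{πτ} y = (1-z²)π⁻¹(τ y' - τ' y) - (2α+1)z(τ/π)y`. -/
noncomputable def bOp (α : ℝ) (τ π : Polynomial ℝ) (y : ℝ → ℝ) (z : ℝ) : ℝ :=
  (1 - z ^ 2) * (τ.eval z * deriv y z - (derivative τ).eval z * y z) / π.eval z
    - (2 * α + 1) * z * (τ.eval z / π.eval z) * y z

/-!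
Write `W(f, g) = f g' - f' g`, and consider for arbitrary coefficients `p`, `q` the operator
`T_τ y = p (y'' - 2 (τ'/τ) y' + (τ''/τ) y) + q y' + (p' - q) (τ'/τ) y`, with `A y = W(π, y) / τ`
and `B y = (p W(τ, y) + q τ y) / π`. Since `W(f, g / f) = g' - 2 (f'/f) g` and
`W(f, g)' = f g'' - f'' g`, both compositions collapse to
`B A y = T_τ y - (T_τ π / π) y` and `A B y = T̂_π y - (T_τ π / π - q') y`,
where `T̂` is the same operator with `q` replaced by `p' + q`. The Gegenbauer case is `p = 1 - z²`,
`q = -(2α + 1) z`: then `p' + q = -(2(α + 1) + 1) z` accounts for the shift `α ↦ α + 1`, and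
`q' = -(2α + 1)` for the shift of the eigenvalue.
-/

section Darboux

variable {𝕜 : Type*} [NontriviallyNormedField 𝕜] {p q τ π f g y : 𝕜 → 𝕜} {z : 𝕜}

/-- The Wronskian `f g' - f' g` of two functions, as opposed to `Polynomial.wronskian`. -/
noncomputable def funWronskian (f g : 𝕜 → 𝕜) (z : 𝕜) : 𝕜 :=
  f z * deriv g z - deriv f z * g z

/-- The exceptional operator with leading coefficient `p`, first-order coefficient `q` and gauge
function `τ`. The zeroth-order coefficient `p' - q` of `τ'/τ` is the one for which the Darboux
factorization below holds. -/
noncomputable def exceptionalOp (p q τ y : 𝕜 → 𝕜) (z : 𝕜) : 𝕜 :=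
  p z * (deriv (deriv y) z - 2 * (deriv τ z / τ z) * deriv y z + deriv (deriv τ) z / τ z * y z)
    + q z * deriv y z + (deriv p z - q z) * (deriv τ z / τ z) * y z

/-- The Darboux transformation with seed `π`, which annihilates `π`. -/
noncomputable def darbouxOp (τ π y : 𝕜 → 𝕜) (z : 𝕜) : 𝕜 :=
  funWronskian π y z / τ z

/-- The dual Darboux transformation: up to sign, the formal adjoint of `darbouxOp τ π` with respect
to the weights `w / τ²` on its domain and `p w / π²` on its range, where `(p w)' = q w`. -/
noncomputable def dualDarbouxOp (p q τ π y : 𝕜 → 𝕜) (z : 𝕜) : 𝕜 :=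
  (p z * funWronskian τ y z + q z * τ z * y z) / π z

theorem hasDerivAt_funWronskian (hf : DifferentiableAt 𝕜 f z)
    (hf' : DifferentiableAt 𝕜 (deriv f) z) (hg : DifferentiableAt 𝕜 g z)
    (hg' : DifferentiableAt 𝕜 (deriv g) z) :
    HasDerivAt (funWronskian f g) (f z * deriv (deriv g) z - deriv (deriv f) z * g z) z :=
  ((hf.hasDerivAt.mul hg'.hasDerivAt).sub (hf'.hasDerivAt.mul hg.hasDerivAt)).congr_deriv (by ring)

theorem funWronskian_div_self (hf : DifferentiableAt 𝕜 f z) (hg : DifferentiableAt 𝕜 g z)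
    (hf0 : f z ≠ 0) :
    funWronskian f (fun x ↦ g x / f x) z = deriv g z - 2 * (deriv f z / f z) * g z := by
  rw [funWronskian, deriv_fun_div hg hf hf0]
  field_simp
  ring

theorem dualDarbouxOp_darbouxOp (hτ : DifferentiableAt 𝕜 τ z) (hπ : DifferentiableAt 𝕜 π z)
    (hπ' : DifferentiableAt 𝕜 (deriv π) z) (hy : DifferentiableAt 𝕜 y z)
    (hy' : DifferentiableAt 𝕜 (deriv y) z) (hτ0 : τ z ≠ 0) (hπ0 : π z ≠ 0) :
    dualDarbouxOp p q τ π (darbouxOp τ π y) z =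
      exceptionalOp p q τ y z - exceptionalOp p q τ π z / π z * y z := by
  have hW := hasDerivAt_funWronskian hπ hπ' hy hy'
  have hA : funWronskian τ (darbouxOp τ π y) z = π z * deriv (deriv y) z - deriv (deriv π) z * y z
      - 2 * (deriv τ z / τ z) * funWronskian π y z := by
    rw [← hW.deriv]
    exact funWronskian_div_self hτ hW.differentiableAt hτ0
  rw [dualDarbouxOp, hA]
  simp only [darbouxOp, exceptionalOp, funWronskian]
  field_simp
  ring

theorem darbouxOp_dualDarbouxOp (hp : DifferentiableAt 𝕜 p z) (hq : DifferentiableAt 𝕜 q z)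
    (hτ : DifferentiableAt 𝕜 τ z) (hτ' : DifferentiableAt 𝕜 (deriv τ) z)
    (hπ : DifferentiableAt 𝕜 π z) (hy : DifferentiableAt 𝕜 y z)
    (hy' : DifferentiableAt 𝕜 (deriv y) z) (hτ0 : τ z ≠ 0) (hπ0 : π z ≠ 0) :
    darbouxOp τ π (dualDarbouxOp p q τ π y) z = exceptionalOp p (deriv p + q) π y z
      - (exceptionalOp p q τ π z / π z - deriv q z) * y z := by
  have hN := (hp.hasDerivAt.fun_mul (hasDerivAt_funWronskian hτ hτ' hy hy')).fun_add
    ((hq.hasDerivAt.fun_mul hτ.hasDerivAt).fun_mul hy.hasDerivAt)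
  have hB := funWronskian_div_self hπ hN.differentiableAt hπ0
  rw [hN.deriv] at hB
  unfold darbouxOp dualDarbouxOp
  rw [hB]
  simp only [exceptionalOp, funWronskian, Pi.add_apply]
  field_simp
  ring

theorem differentiableAt_deriv_of_contDiffAt_two (hf : ContDiffAt 𝕜 2 f z) :
    DifferentiableAt 𝕜 (deriv f) z :=
  (hf.derivWithin one_add_one_eq_two.le).differentiableAt_one

theorem darboux_factorization {lam : 𝕜} (hp : DifferentiableAt 𝕜 p z)
    (hq : DifferentiableAt 𝕜 q z) (hτ : ContDiffAt 𝕜 2 τ z) (hπ : ContDiffAt 𝕜 2 π z)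
    (hτ0 : τ z ≠ 0) (hπ0 : π z ≠ 0) (heig : exceptionalOp p q τ π z = lam * π z)
    (hy : ContDiffAt 𝕜 2 y z) :
    dualDarbouxOp p q τ π (darbouxOp τ π y) z = exceptionalOp p q τ y z - lam * y z ∧
      darbouxOp τ π (dualDarbouxOp p q τ π y) z =
        exceptionalOp p (deriv p + q) π y z - (lam - deriv q z) * y z := by
  have hlam : exceptionalOp p q τ π z / π z = lam := by rw [heig, mul_div_cancel_right₀ _ hπ0]
  have hτ1 := hτ.differentiableAt two_ne_zero
  have hπ1 := hπ.differentiableAt two_ne_zero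
  have hy1 := hy.differentiableAt two_ne_zero
  have hy2 := differentiableAt_deriv_of_contDiffAt_two hy
  constructor
  · rw [dualDarbouxOp_darbouxOp hτ1 hπ1 (differentiableAt_deriv_of_contDiffAt_two hπ) hy1 hy2
      hτ0 hπ0, hlam]
  · rw [darbouxOp_dualDarbouxOp hp hq hτ1 (differentiableAt_deriv_of_contDiffAt_two hτ) hπ1 hy1 hy2
      hτ0 hπ0, hlam]

end Darboux

section Gegenbauer

/-- The leading coefficient of the Gegenbauer operators. -/
def gegenbauerLead (z : ℝ) : ℝ := 1 - z ^ 2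

/-- The first-order coefficient of the Gegenbauer operator with parameter `α`. -/
def gegenbauerDrift (α z : ℝ) : ℝ := -(2 * α + 1) * z

theorem hasDerivAt_gegenbauerLead (z : ℝ) : HasDerivAt gegenbauerLead (-2 * z) z :=
  ((hasDerivAt_pow 2 z).const_sub 1).congr_deriv (by ring)

theorem hasDerivAt_gegenbauerDrift (α z : ℝ) :
    HasDerivAt (gegenbauerDrift α) (-(2 * α + 1)) z :=
  hasDerivAt_const_mul _

theorem deriv_gegenbauerLead_add_gegenbauerDrift (α : ℝ) :
    deriv gegenbauerLead + gegenbauerDrift α = gegenbauerDrift (α + 1) := by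
  ext z
  rw [Pi.add_apply, (hasDerivAt_gegenbauerLead z).deriv, gegenbauerDrift, gegenbauerDrift]
  ring

theorem deriv_polynomial_eval (P : ℝ[X]) : deriv (P.eval ·) = ((derivative P).eval ·) :=
  funext fun _ ↦ P.deriv

theorem xGegenOp_eq_exceptionalOp (α : ℝ) (τ : ℝ[X]) :
    xGegenOp α τ = exceptionalOp gegenbauerLead (gegenbauerDrift α) (τ.eval ·) := by
  ext y z
  simp only [xGegenOp, exceptionalOp, deriv_polynomial_eval, (hasDerivAt_gegenbauerLead z).deriv,
    gegenbauerLead, gegenbauerDrift]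
  ring

theorem aOp_eq_darbouxOp (τ π : ℝ[X]) : aOp τ π = darbouxOp (τ.eval ·) (π.eval ·) := by
  ext y z
  simp only [aOp, darbouxOp, funWronskian, deriv_polynomial_eval]

theorem bOp_eq_dualDarbouxOp (α : ℝ) (τ π : ℝ[X]) :
    bOp α τ π = dualDarbouxOp gegenbauerLead (gegenbauerDrift α) (τ.eval ·) (π.eval ·) := by
  ext y z
  simp only [bOp, dualDarbouxOp, funWronskian, deriv_polynomial_eval, gegenbauerLead,
    gegenbauerDrift]
  ring

theorem statement8_general {α lam z : ℝ} {τ π : ℝ[X]} {y : ℝ → ℝ} (hτ0 : τ.eval z ≠ 0)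
    (hπ0 : π.eval z ≠ 0) (heig : xGegenOp α τ (π.eval ·) z = lam * π.eval z)
    (hy : ContDiffAt ℝ 2 y z) :
    bOp α τ π (aOp τ π y) z = xGegenOp α τ y z - lam * y z ∧
      aOp τ π (bOp α τ π y) z = xGegenOp (α + 1) π y z - (lam + 2 * α + 1) * y z := by
  have hshift : lam + 2 * α + 1 = lam - deriv (gegenbauerDrift α) z := by
    rw [(hasDerivAt_gegenbauerDrift α z).deriv]
    ring
  rw [xGegenOp_eq_exceptionalOp] at heig ⊢
  rw [xGegenOp_eq_exceptionalOp, aOp_eq_darbouxOp, bOp_eq_dualDarbouxOp,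
    ← deriv_gegenbauerLead_add_gegenbauerDrift, hshift]
  exact darboux_factorization (hasDerivAt_gegenbauerLead z).differentiableAt
    (hasDerivAt_gegenbauerDrift α z).differentiableAt (τ.contDiff_aeval 2).contDiffAt
    (π.contDiff_aeval 2).contDiffAt hτ0 hπ0 heig hy

end Gegenbauer

/-- if `T^{(α)}_τ π = λπ` on `I`, then `BA = T^{(α)}_τ - λ` and
`AB = T^{(α+1)}_π - (λ + 2α + 1)` on `I`. -/
theorem statement8 (a b : ℝ) (hab : a < b) (ha : -1 ≤ a) (hb : b ≤ 1)
    (α lam : ℝ) (τ π : Polynomial ℝ)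
    (hτ0 : ∀ z ∈ Ioo a b, τ.eval z ≠ 0) (hπ0 : ∀ z ∈ Ioo a b, π.eval z ≠ 0)
    (heig : ∀ z ∈ Ioo a b, xGegenOp α τ (fun x => π.eval x) z = lam * π.eval z) :
    ∀ y : ℝ → ℝ, ContDiffOn ℝ (⊤ : ℕ∞) y (Ioo a b) → ∀ z ∈ Ioo a b,
      bOp α τ π (aOp τ π y) z = xGegenOp α τ y z - lam * y z ∧
      aOp τ π (bOp α τ π y) z = xGegenOp (α + 1) π y z - (lam + 2 * α + 1) * y z :=
  fun _ hy z hz ↦ statement8_general (hτ0 z hz) (hπ0 z hz) (heig z hz)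
    ((hy.contDiffAt (Ioo_mem_nhds hz.1 hz.2)).of_le ENat.LEInfty.out)
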